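/- The set of (equivalence classes of) functions of the form x ↦ P(x) · exp(−x²/4), where P ranges over all polynomials with complex coefficients, is dense in L²(ℝ, ℂ) (with respect to Lebesgue measure and the L² norm). -/

import Mathlib

open MeasureTheory

open scoped FourierTransform ContDiff in
lemma aux_ae_zero_of_fourier {g : ℝ → ℂ} (hg : Integrable g) (h : ∀ w, 𝓕 g w = 0) :
    ∀ᵐ x, g x = 0 := by
  apply ae_eq_zero_of_integral_contDiff_smul_eq_zero hg.locallyIntegrable
  intro φ hφ hc
  have hc' : HasCompactSupport (fun x => (φ x : ℂ)) := hc.comp_left (g := fun r : ℝ => (r : ℂ)) (by simp)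
  have hφ' : ContDiff ℝ ∞ (fun x => (φ x : ℂ)) := Complex.ofRealCLM.contDiff.comp hφ
  let ψ : SchwartzMap ℝ ℂ := hc'.toSchwartzMap hφ'
  have key := VectorFourier.integral_fourierIntegral_smul_eq_flip (L := innerₗ ℝ)
    (μ := volume) (ν := volume)
    Real.continuous_fourierChar continuous_inner hg (𝓕⁻ ψ).integrable
  have h1 : ∀ x, VectorFourier.fourierIntegral Real.fourierChar volume (innerₗ ℝ) g x = 0 := h
  have h2 : ∀ x, VectorFourier.fourierIntegral Real.fourierChar volume (innerₗ ℝ).flip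
      (𝓕⁻ ψ : SchwartzMap ℝ ℂ) x = φ x := by
    intro x
    rw [flip_innerₗ]
    change (𝓕 (𝓕⁻ ψ) : SchwartzMap ℝ ℂ) x = _
    rw [FourierTransform.fourier_fourierInv_eq]
    rfl
  simp only [h1, h2, zero_smul, integral_zero] at key
  rw [key]
  congr 1; ext x; simp [mul_comm]

lemma aux_memLp_exp (a : ℝ) :
    MemLp (fun x : ℝ => Real.exp (a * |x| - x ^ 2 / 4)) 2 volume := by
  have hm : AEStronglyMeasurable (fun x : ℝ => Real.exp (a * |x| - x ^ 2 / 4)) volume :=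
    (by fun_prop : Continuous _).aestronglyMeasurable
  rw [memLp_two_iff_integrable_sq hm]
  refine ((integrable_exp_neg_mul_sq (b := 1/4) (by norm_num)).const_mul
    (Real.exp (4 * a ^ 2))).mono' (hm.pow 2) (Filter.Eventually.of_forall fun x => ?_)
  rw [Real.norm_of_nonneg (by positivity), ← Real.exp_nat_mul, ← Real.exp_add]
  apply Real.exp_le_exp.mpr
  push_cast
  nlinarith [sq_nonneg (2 * a - |x| / 2), sq_abs x]

lemma aux_norm_gauss (x : ℝ) : ‖Complex.exp (-(x : ℂ) ^ 2 / 4)‖ = Real.exp (- x ^ 2 / 4) := by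
  have : (-(x : ℂ) ^ 2 / 4) = ((-x ^ 2 / 4 : ℝ) : ℂ) := by push_cast; ring
  rw [this, ← Complex.ofReal_exp, Complex.norm_real, Real.norm_of_nonneg (Real.exp_pos _).le]

lemma aux_memLp_mono (n : ℕ) :
    MemLp (fun x : ℝ => (x : ℂ) ^ n * Complex.exp (-(x : ℂ) ^ 2 / 4)) 2 volume := by
  refine ((aux_memLp_exp 1).const_mul (n.factorial : ℝ)).mono
    (by fun_prop : Continuous _).aestronglyMeasurable (Filter.Eventually.of_forall fun x => ?_)
  rw [norm_mul, norm_pow, aux_norm_gauss, Complex.norm_real, Real.norm_eq_abs x,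
    Real.norm_of_nonneg (by positivity), sub_eq_add_neg, Real.exp_add, ← mul_assoc, one_mul, neg_div]
  gcongr
  have := Real.pow_div_factorial_le_exp _ (abs_nonneg x) n
  rw [div_le_iff₀ (by positivity)] at this
  linarith

lemma aux_integrable (f : Lp ℂ 2 (volume : Measure ℝ)) (a : ℝ) :
    Integrable (fun x : ℝ => ‖f x * Complex.exp (-(x : ℂ) ^ 2 / 4)‖ * Real.exp (a * |x|)) := by
  have := (Lp.memLp f).norm.integrable_mul (aux_memLp_exp a)
  refine this.congr (Filter.Eventually.of_forall fun x => ?_)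
  simp only [Pi.mul_apply, norm_mul, aux_norm_gauss, mul_assoc, ← Real.exp_add]
  ring_nf

open scoped FourierTransform in
lemma aux_main (f : Lp ℂ 2 (volume : Measure ℝ))
    (h : ∀ n : ℕ, ∫ x : ℝ, f x * ((x : ℂ) ^ n * Complex.exp (-(x : ℂ) ^ 2 / 4)) = 0) : f = 0 := by
  set g : ℝ → ℂ := fun x => f x * Complex.exp (-(x : ℂ) ^ 2 / 4) with hgdef
  have hgm : AEStronglyMeasurable g volume :=
    (Lp.aestronglyMeasurable f).mul (by fun_prop : Continuous _).aestronglyMeasurable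
  have hgi : Integrable g := by
    have := aux_integrable f 0
    simp only [zero_mul, Real.exp_zero, mul_one] at this
    exact (integrable_norm_iff hgm).1 this
  have hF : ∀ w, 𝓕 g w = 0 := by
    intro w
    rw [Real.fourier_real_eq_integral_exp_smul]
    have hs := hasSum_integral_of_dominated_convergence (μ := (volume : Measure ℝ))
      (F := fun (n : ℕ) (x : ℝ) => (((-2 * Real.pi * x * w : ℝ) : ℂ) * Complex.I) ^ n / n.factorial * g x)
      (f := fun x : ℝ => Complex.exp (((-2 * Real.pi * x * w : ℝ) : ℂ) * Complex.I) • g x)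
      (bound := fun n x => ‖g x‖ * (((2 * Real.pi * |w|) * |x|) ^ n / n.factorial))
      (fun n => ((by fun_prop : Continuous _).aestronglyMeasurable).mul hgm)
      (fun n => Filter.Eventually.of_forall fun x => by
        simp [abs_of_pos Real.pi_pos]
        apply le_of_eq; ring)
      (Filter.Eventually.of_forall fun x => (Real.summable_pow_div_factorial _).mul_left _)
      (by
        refine (aux_integrable f (2 * Real.pi * |w|)).congr (Filter.Eventually.of_forall fun x => ?_)
        simp only [tsum_mul_left]
        rw [Real.exp_eq_exp_ℝ, NormedSpace.exp_eq_tsum_div])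
      (Filter.Eventually.of_forall fun x => by
        rw [smul_eq_mul]
        apply HasSum.mul_right
        rw [Complex.exp_eq_exp_ℂ]
        exact NormedSpace.expSeries_div_hasSum_exp _)
    refine hs.unique ?_
    convert hasSum_zero using 2 with n
    have : ∀ x : ℝ, (((-2 * Real.pi * x * w : ℝ) : ℂ) * Complex.I) ^ n / n.factorial * g x
        = ((-2 * Real.pi * w * Complex.I) ^ n / n.factorial) *
          (f x * ((x : ℂ) ^ n * Complex.exp (-(x : ℂ) ^ 2 / 4))) := by
      intro x
      simp only [hgdef]
      push_cast
      simp only [mul_pow]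
      ring
    simp only [this]
    rw [integral_const_mul, h, mul_zero]
  have := aux_ae_zero_of_fourier hgi hF
  rw [Lp.eq_zero_iff_ae_eq_zero]
  filter_upwards [this] with x hx
  simpa [hgdef] using hx

/-- The functions `x ↦ P(x)·exp(−x²/4)`, `P` a complex polynomial, form a
dense subset of L²(ℝ, ℂ) (Example 2). -/
theorem polynomial_mul_gaussian_dense_in_L2 :
    Dense {f : Lp ℂ 2 (volume : Measure ℝ) |
      ∃ P : Polynomial ℂ,
        (f : ℝ → ℂ) =ᵐ[volume]
          fun x : ℝ => P.eval (x : ℂ) * Complex.exp (-(x : ℂ) ^ 2 / 4)} := by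
  let K : Submodule ℂ (Lp ℂ 2 (volume : Measure ℝ)) :=
    { carrier := {f | ∃ P : Polynomial ℂ, (f : ℝ → ℂ) =ᵐ[volume]
          fun x : ℝ => P.eval (x : ℂ) * Complex.exp (-(x : ℂ) ^ 2 / 4)}
      add_mem' := by
        rintro f g ⟨P, hP⟩ ⟨Q, hQ⟩
        refine ⟨P + Q, ?_⟩
        filter_upwards [hP, hQ, Lp.coeFn_add f g] with x h1 h2 h3
        rw [h3, Pi.add_apply, h1, h2, Polynomial.eval_add, add_mul]
      zero_mem' := by
        refine ⟨0, ?_⟩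
        filter_upwards [Lp.coeFn_zero ℂ 2 (volume : Measure ℝ)] with x h
        rw [h]; simp
      smul_mem' := by
        rintro c f ⟨P, hP⟩
        refine ⟨c • P, ?_⟩
        filter_upwards [hP, Lp.coeFn_smul c f] with x h1 h2
        rw [h2, Pi.smul_apply, h1, Polynomial.eval_smul, smul_eq_mul, smul_eq_mul, mul_assoc] }
  change Dense (K : Set (Lp ℂ 2 (volume : Measure ℝ)))
  rw [Submodule.dense_iff_topologicalClosure_eq_top, Submodule.topologicalClosure_eq_top_iff,
    Submodule.eq_bot_iff]
  intro f hf
  apply aux_main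
  intro n
  have hmem : (aux_memLp_mono n).toLp _ ∈ K :=
    ⟨Polynomial.X ^ n, by simpa using (aux_memLp_mono n).coeFn_toLp⟩
  have h0 := (Submodule.mem_orthogonal K f).1 hf _ hmem
  rw [L2.inner_def] at h0
  rw [← h0]
  apply integral_congr_ae
  filter_upwards [(aux_memLp_mono n).coeFn_toLp] with x hx
  rw [hx, RCLike.inner_apply]
  have : (-(x : ℂ) ^ 2 / 4) = ((-x ^ 2 / 4 : ℝ) : ℂ) := by push_cast; ring
  rw [this, ← Complex.ofReal_exp, map_mul, map_pow, Complex.conj_ofReal, Complex.conj_ofReal]
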